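/- arXiv:0801.4259 — 7 statements merged into one kernel-verified Lean document; each statement's English description precedes it below -/
import Mathlib

section
/- Let H be a complex Hilbert space, M a von Neumann algebra acting on H, and ξ₀ a cyclic and separating vector for M. Let p be an orthogonal projection on H such that p(P♯) ⊆ P♯ and (1 − p)(P♯) ⊆ P♯. Then for every positive a ∈ M there exists a positive element α(a) ∈ M such that p a ξ₀ = α(a) ξ₀ and α(a) ≤ a (i.e. a − α(a) is positive). -/
open scoped InnerProductSpace
open Filter

variable {H : Type*} [NormedAddCommGroup H] [InnerProductSpace ℂ H] [CompleteSpace H]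

/-- The positive cone `P♯`: the closure in `H` of `{a ξ₀ : a ∈ M, a positive}`. -/
def sharpCone (M : VonNeumannAlgebra H) (ξ₀ : H) : Set H :=
  closure {ζ : H | ∃ a : H →L[ℂ] H, a ∈ M ∧ a.IsPositive ∧ a ξ₀ = ζ}

/-- `ξ₀` is a cyclic vector for `M`: the linear span of `{x ξ₀ : x ∈ M}` is dense in `H`. -/
def IsCyclicVector (M : VonNeumannAlgebra H) (ξ₀ : H) : Prop :=
  Dense ((Submodule.span ℂ ((fun x : H →L[ℂ] H => x ξ₀) '' (M : Set (H →L[ℂ] H)))) : Set H)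

/-- `ξ₀` is a separating vector for `M`: `x ∈ M` and `x ξ₀ = 0` imply `x = 0`. -/
def IsSeparatingVector (M : VonNeumannAlgebra H) (ξ₀ : H) : Prop :=
  ∀ x : H →L[ℂ] H, x ∈ M → x ξ₀ = 0 → x = 0

namespace VonNeumannAlgebra

/-- The linear map `x ↦ x ξ` on a von Neumann algebra. -/
noncomputable def orbitMap (N : VonNeumannAlgebra H) (ξ : H) :
    N.toStarSubalgebra.toSubalgebra.toSubmodule →ₗ[ℂ] H :=
  (ContinuousLinearMap.apply ℂ H ξ).toLinearMap ∘ₗ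
    N.toStarSubalgebra.toSubalgebra.toSubmodule.subtype

theorem orbitMap_apply (N : VonNeumannAlgebra H) (ξ : H)
    (x : N.toStarSubalgebra.toSubalgebra.toSubmodule) :
    N.orbitMap ξ x = (x : H →L[ℂ] H) ξ := rfl

theorem apply_comm_of_mem_commutant {M : VonNeumannAlgebra H} {a x : H →L[ℂ] H}
    (ha : a ∈ M) (hx : x ∈ M.commutant) (v : H) : x (a v) = a (x v) :=
  (DFunLike.congr_fun (mem_commutant_iff.1 hx a ha) v).symm

/-- A vector separating for `M` is cyclic for the commutant of `M`. -/
theorem denseRange_orbitMap_commutant {M : VonNeumannAlgebra H} {ξ₀ : H}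
    (hsep : IsSeparatingVector M ξ₀) : DenseRange (M.commutant.orbitMap ξ₀) := by
  set K := (LinearMap.range (M.commutant.orbitMap ξ₀)).topologicalClosure
  have : CompleteSpace K :=
    (Submodule.isClosed_topologicalClosure _).completeSpace_coe
  have hmem : K.starProjection ∈ M := by
    rw [VonNeumannAlgebra.IsStarProjection.mem_iff isStarProjection_starProjection]
    intro y hy
    rw [Submodule.range_starProjection, Module.End.mem_invtSubmodule]
    intro v hv
    rw [Submodule.mem_comap]
    refine map_mem_closure (f := y) y.continuous hv ?_
    rintro _ ⟨x, rfl⟩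
    exact ⟨⟨y * x, mul_mem (s := M.commutant.toStarSubalgebra) hy x.2⟩, rfl⟩
  have hξ : ξ₀ ∈ K :=
    Submodule.le_topologicalClosure _ ⟨⟨1, one_mem M.commutant.toStarSubalgebra⟩, rfl⟩
  have h1 : 1 - K.starProjection = 0 := by
    refine hsep _ (sub_mem (one_mem M) hmem) ?_
    simp [Submodule.starProjection_eq_self_iff.2 hξ]
  intro v
  have hv : K.starProjection v = v := by rw [← sub_eq_zero.1 h1]; rfl
  exact Submodule.starProjection_eq_self_iff.1 hv

end VonNeumannAlgebra

open VonNeumannAlgebra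

/-- Positivity of a bounded operator may be tested on a dense set of vectors. -/
theorem ContinuousLinearMap.isPositive_of_denseRange {ι : Type*} {e : ι → H} (he : DenseRange e)
    {T : H →L[ℂ] H}
    (h : ∀ i, ((⟪T (e i), e i⟫_ℂ).re : ℂ) = ⟪T (e i), e i⟫_ℂ ∧ 0 ≤ (⟪T (e i), e i⟫_ℂ).re) :
    T.IsPositive := by
  rw [ContinuousLinearMap.isPositive_iff_complex]
  intro x
  refine he.induction_on x (p := fun x => ((⟪T x, x⟫_ℂ).re : ℂ) = ⟪T x, x⟫_ℂ ∧
    0 ≤ (⟪T x, x⟫_ℂ).re) ?_ h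
  rw [Set.ofPred_and]
  refine IsClosed.inter (isClosed_eq ?_ ?_) (isClosed_le ?_ ?_) <;> fun_prop

/-- The Cauchy-Schwarz inequality for the form of a positive operator. -/
theorem ContinuousLinearMap.IsPositive.norm_inner_sq_le {T : H →L[ℂ] H} (hT : T.IsPositive)
    (x y : H) : ‖⟪x, T y⟫_ℂ‖ ^ 2 ≤ (⟪T x, x⟫_ℂ).re * (⟪T y, y⟫_ℂ).re := by
  obtain ⟨s, rfl⟩ := CStarAlgebra.nonneg_iff_eq_star_mul_self.1
    ((ContinuousLinearMap.nonneg_iff_isPositive T).2 hT)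
  have key (u v : H) : ⟪u, (star s * s) v⟫_ℂ = ⟪s u, s v⟫_ℂ := by
    rw [mul_apply_eq_comp, ContinuousLinearMap.star_eq_adjoint,
      ContinuousLinearMap.adjoint_inner_right]
  have key' (u : H) : (⟪(star s * s) u, u⟫_ℂ).re = ‖s u‖ ^ 2 := by
    rw [← inner_conj_symm, key, Complex.conj_re]
    exact inner_self_eq_norm_sq (𝕜 := ℂ) (s u)
  rw [key, key', key', ← mul_pow]
  gcongr
  exact norm_inner_le_norm _ _

section SharpCone

variable {M : VonNeumannAlgebra H} {ξ₀ ζ : H}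

theorem inner_apply_nonneg_of_mem_sharpCone (hζ : ζ ∈ sharpCone M ξ₀) {x : H →L[ℂ] H}
    (hx : x ∈ M.commutant) :
    ((⟪x ζ, x ξ₀⟫_ℂ).re : ℂ) = ⟪x ζ, x ξ₀⟫_ℂ ∧ 0 ≤ (⟪x ζ, x ξ₀⟫_ℂ).re := by
  have hcl : IsClosed {ζ : H | ((⟪x ζ, x ξ₀⟫_ℂ).re : ℂ) = ⟪x ζ, x ξ₀⟫_ℂ ∧
      0 ≤ (⟪x ζ, x ξ₀⟫_ℂ).re} := by
    rw [Set.ofPred_and]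
    refine IsClosed.inter (isClosed_eq ?_ ?_) (isClosed_le ?_ ?_) <;> fun_prop
  refine closure_minimal ?_ hcl hζ
  rintro _ ⟨a, ha, hpos, rfl⟩
  rw [Set.mem_ofPred_eq, apply_comm_of_mem_commutant ha hx]
  exact (ContinuousLinearMap.isPositive_iff_complex a).1 hpos (x ξ₀)

theorem norm_inner_sq_le_of_mem_sharpCone (hζ : ζ ∈ sharpCone M ξ₀) {x y : H →L[ℂ] H}
    (hx : x ∈ M.commutant) (hy : y ∈ M.commutant) :
    ‖⟪x ξ₀, y ζ⟫_ℂ‖ ^ 2 ≤ (⟪x ζ, x ξ₀⟫_ℂ).re * (⟪y ζ, y ξ₀⟫_ℂ).re := by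
  have hcl : IsClosed {ζ : H | ‖⟪x ξ₀, y ζ⟫_ℂ‖ ^ 2 ≤
      (⟪x ζ, x ξ₀⟫_ℂ).re * (⟪y ζ, y ξ₀⟫_ℂ).re} :=
    isClosed_le (by fun_prop) (by fun_prop)
  refine closure_minimal ?_ hcl hζ
  rintro _ ⟨a, ha, hpos, rfl⟩
  rw [Set.mem_ofPred_eq, apply_comm_of_mem_commutant ha hx, apply_comm_of_mem_commutant ha hy]
  exact hpos.norm_inner_sq_le _ _

/-- If `ζ` and `a ξ₀ - ζ` lie in `P♯`, then `‖y ζ‖ ≤ ‖a‖ ‖y ξ₀‖` for all `y` in the commutant. -/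
theorem norm_apply_le_of_mem_sharpCone (hsep : IsSeparatingVector M ξ₀) {a : H →L[ℂ] H}
    (ha : a ∈ M) (hζ : ζ ∈ sharpCone M ξ₀) (hζ' : a ξ₀ - ζ ∈ sharpCone M ξ₀) {y : H →L[ℂ] H}
    (hy : y ∈ M.commutant) : ‖y ζ‖ ≤ ‖a‖ * ‖y ξ₀‖ := by
  have hq {x : H →L[ℂ] H} (hx : x ∈ M.commutant) :
      (⟪x ζ, x ξ₀⟫_ℂ).re ≤ ‖a‖ * ‖x ξ₀‖ ^ 2 := by
    have h := (inner_apply_nonneg_of_mem_sharpCone hζ' hx).2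
    rw [map_sub, inner_sub_left, Complex.sub_re, apply_comm_of_mem_commutant ha hx] at h
    calc (⟪x ζ, x ξ₀⟫_ℂ).re ≤ (⟪a (x ξ₀), x ξ₀⟫_ℂ).re := by linarith
      _ ≤ ‖a (x ξ₀)‖ * ‖x ξ₀‖ := (Complex.re_le_norm _).trans (norm_inner_le_norm _ _)
      _ ≤ ‖a‖ * ‖x ξ₀‖ * ‖x ξ₀‖ := by gcongr; exact a.le_opNorm _
      _ = ‖a‖ * ‖x ξ₀‖ ^ 2 := by ring
  have hbound (v : H) : ‖⟪v, y ζ⟫_ℂ‖ ≤ ‖a‖ * ‖y ξ₀‖ * ‖v‖ := by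
    refine (denseRange_orbitMap_commutant hsep).induction_on v
      (p := fun v => ‖⟪v, y ζ⟫_ℂ‖ ≤ ‖a‖ * ‖y ξ₀‖ * ‖v‖)
      (isClosed_le (by fun_prop) (by fun_prop)) fun x => ?_
    rw [orbitMap_apply]
    refine le_of_sq_le_sq ?_ (by positivity)
    calc ‖⟪(x : H →L[ℂ] H) ξ₀, y ζ⟫_ℂ‖ ^ 2
        ≤ _ := norm_inner_sq_le_of_mem_sharpCone hζ x.2 hy
      _ ≤ (‖a‖ * ‖(x : H →L[ℂ] H) ξ₀‖ ^ 2) * (‖a‖ * ‖y ξ₀‖ ^ 2) :=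
        mul_le_mul (hq x.2) (hq hy) (inner_apply_nonneg_of_mem_sharpCone hζ hy).2 (by positivity)
      _ = _ := by ring
  have h := hbound (y ζ)
  rw [inner_self_eq_norm_sq_to_K, norm_pow, RCLike.norm_ofReal, abs_norm, sq] at h
  rcases (norm_nonneg (y ζ)).eq_or_lt with h0 | h0
  · rw [← h0]; positivity
  · exact le_of_mul_le_mul_right h h0

/-- A Radon-Nikodym type property of `P♯`: a vector `ζ` with `0 ≤ ζ ≤ a ξ₀` in the order of `P♯`
has the form `b ξ₀` with `b ∈ M` and `0 ≤ b ≤ a`. -/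
theorem exists_isPositive_apply_eq_of_mem_sharpCone (hsep : IsSeparatingVector M ξ₀)
    {a : H →L[ℂ] H} (ha : a ∈ M) (hζ : ζ ∈ sharpCone M ξ₀) (hζ' : a ξ₀ - ζ ∈ sharpCone M ξ₀) :
    ∃ b : H →L[ℂ] H, b ∈ M ∧ b.IsPositive ∧ ζ = b ξ₀ ∧ (a - b).IsPositive := by
  have hd := denseRange_orbitMap_commutant hsep
  let b : H →L[ℂ] H := (M.commutant.orbitMap ζ).extendOfNorm (M.commutant.orbitMap ξ₀)
  have hb {y : H →L[ℂ] H} (hy : y ∈ M.commutant) : b (y ξ₀) = y ζ :=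
    LinearMap.extendOfNorm_eq (f := M.commutant.orbitMap ζ) hd
      ⟨‖a‖, fun y => norm_apply_le_of_mem_sharpCone hsep ha hζ hζ' y.2⟩ ⟨y, hy⟩
  refine ⟨b, ?_, ?_, ?_, ?_⟩
  · rw [← M.commutant_commutant, mem_commutant_iff]
    intro y hy
    ext v
    refine hd.induction_on v (p := fun v => (y * b) v = (b * y) v)
      (isClosed_eq (by fun_prop) (by fun_prop)) fun x => ?_
    have h := hb (mul_mem hy (show (x : H →L[ℂ] H) ∈ M.commutant from x.2))
    rw [orbitMap_apply, mul_apply_eq_comp, hb x.2]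
    exact h.symm
  · refine ContinuousLinearMap.isPositive_of_denseRange hd fun x => ?_
    rw [orbitMap_apply, hb x.2]
    exact inner_apply_nonneg_of_mem_sharpCone hζ x.2
  · exact (hb (one_mem M.commutant)).symm
  · refine ContinuousLinearMap.isPositive_of_denseRange hd fun x => ?_
    rw [orbitMap_apply, sub_apply, hb x.2,
      ← apply_comm_of_mem_commutant ha x.2, ← map_sub]
    exact inner_apply_nonneg_of_mem_sharpCone hζ' x.2

end SharpCone

/-- If the orthogonal projection `p` and `1 - p` both preserve `P♯`, then for
every positive `a ∈ M` there is a positive `α(a) ∈ M` with `p a ξ₀ = α(a) ξ₀` and `α(a) ≤ a`. -/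
theorem stmt10 (M : VonNeumannAlgebra H) (ξ₀ : H)
    (hcyc : IsCyclicVector M ξ₀) (hsep : IsSeparatingVector M ξ₀)
    (p : H →L[ℂ] H) (hp_sa : IsSelfAdjoint p) (hp_idem : p * p = p)
    (hp : ∀ ζ ∈ sharpCone M ξ₀, p ζ ∈ sharpCone M ξ₀)
    (hp' : ∀ ζ ∈ sharpCone M ξ₀, (1 - p) ζ ∈ sharpCone M ξ₀)
    (a : H →L[ℂ] H) (haM : a ∈ M) (ha_pos : a.IsPositive) :
    ∃ b : H →L[ℂ] H, b ∈ M ∧ b.IsPositive ∧ p (a ξ₀) = b ξ₀ ∧ (a - b).IsPositive := by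
  have hmem : a ξ₀ ∈ sharpCone M ξ₀ := subset_closure ⟨a, haM, ha_pos, rfl⟩
  exact exists_isPositive_apply_eq_of_mem_sharpCone hsep haM (hp _ hmem)
    (by simpa using hp' _ hmem)
end

section
/- Let H be a complex Hilbert space, M a von Neumann algebra acting on H, and ξ₀ a separating vector for M. Let p be an orthogonal projection on H. If e ∈ M is a projection and b ∈ M is positive with b ≤ e (i.e. e − b positive) and b ξ₀ = p e ξ₀, then b is a projection, i.e. b² = b. -/
open scoped InnerProductSpace
open Filter

variable {H : Type*} [NormedAddCommGroup H] [InnerProductSpace ℂ H] [CompleteSpace H]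

/-- A positive operator annihilates every vector at which its quadratic form vanishes. -/
theorem ContinuousLinearMap.IsPositive.apply_eq_zero_of_inner_eq_zero {c : H →L[ℂ] H}
    (hc : c.IsPositive) {x : H} (hx : ⟪c x, x⟫_ℂ = 0) : c x = 0 := by
  have hc0 : 0 ≤ c := (ContinuousLinearMap.nonneg_iff_isPositive c).2 hc
  have hsq : CFC.sqrt c * CFC.sqrt c = c := CFC.sqrt_mul_sqrt_self c hc0
  have hsym : (CFC.sqrt c).IsSymmetric :=
    ((ContinuousLinearMap.nonneg_iff_isPositive _).1 (CFC.sqrt_nonneg c)).isSymmetric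
  have happ (y : H) : c y = CFC.sqrt c (CFC.sqrt c y) := by
    conv_lhs => rw [← hsq]
    rfl
  have h0 : CFC.sqrt c x = 0 := by
    rw [happ] at hx
    exact inner_self_eq_zero.1 ((hsym _ _).symm.trans hx)
  rw [happ, h0, map_zero]

open scoped ComplexOrder in
/-- A positive operator dominated by a projection is absorbed by it on the right. -/
theorem ContinuousLinearMap.IsPositive.mul_eq_self_of_le_idempotent {b e : H →L[ℂ] H}
    (hb : b.IsPositive) (he : e * e = e) (hbe : (e - b).IsPositive) : b * e = b := by
  ext x
  have hey : e (x - e x) = 0 := by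
    rw [map_sub, sub_eq_zero]
    exact (DFunLike.congr_fun he x).symm
  have hy : ⟪b (x - e x), x - e x⟫_ℂ = 0 := by
    refine le_antisymm ?_ (hb.inner_nonneg_left _)
    have h := hbe.inner_nonneg_left (x - e x)
    rwa [sub_apply, hey, zero_sub, inner_neg_left, neg_nonneg] at h
  have := hb.apply_eq_zero_of_inner_eq_zero hy
  rw [map_sub, sub_eq_zero] at this
  exact this.symm

/-- If `0 ≤ b ≤ 1` then `b - b²` is positive. -/
theorem ContinuousLinearMap.IsPositive.sub_mul_self {b : H →L[ℂ] H}
    (hb : b.IsPositive) (hb1 : (1 - b).IsPositive) : (b - b * b).IsPositive := by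
  have h1 := hb1.conj_adjoint b
  have h2 := hb.conj_adjoint (1 - b)
  rw [hb.isSelfAdjoint.adjoint_eq] at h1
  rw [hb1.isSelfAdjoint.adjoint_eq] at h2
  convert h1.add h2 using 1
  change b - b * b = b * ((1 - b) * b) + (1 - b) * (b * (1 - b))
  noncomm_ring

/-- If `e ∈ M` is a projection and `b ∈ M` is positive with `b ≤ e` and
`b ξ₀ = p e ξ₀`, where `p` is an orthogonal projection on `H`, then `b` is a projection. -/
theorem stmt11 (M : VonNeumannAlgebra H) (ξ₀ : H) (hsep : IsSeparatingVector M ξ₀)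
    (p : H →L[ℂ] H) (hp_sa : IsSelfAdjoint p) (hp_idem : p * p = p)
    (e : H →L[ℂ] H) (heM : e ∈ M) (he_sa : IsSelfAdjoint e) (he_idem : e * e = e)
    (b : H →L[ℂ] H) (hbM : b ∈ M) (hb_pos : b.IsPositive)
    (hb_le : (e - b).IsPositive) (hbe : b ξ₀ = p (e ξ₀)) :
    b * b = b := by
  have hmul : b * e = b := hb_pos.mul_eq_self_of_le_idempotent he_idem hb_le
  have he1 : (1 - e).IsPositive :=
    (ContinuousLinearMap.le_def e 1).1 (IsStarProjection.mk he_idem he_sa).le_one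
  have hb1 : (1 - b).IsPositive := by simpa using he1.add hb_le
  have hc := hb_pos.sub_mul_self hb1
  have hp (x y : H) : ⟪p x, y⟫_ℂ = ⟪x, p y⟫_ℂ := hp_sa.isSymmetric x y
  have hinner : ⟪(b - b * b) ξ₀, ξ₀⟫_ℂ = 0 := by
    have hfac : (b - b * b) ξ₀ = b (e ξ₀ - b ξ₀) := by
      have hbeξ : b (e ξ₀) = b ξ₀ := DFunLike.congr_fun hmul ξ₀
      rw [map_sub, hbeξ]
      rfl
    have hpp : p (p (e ξ₀)) = p (e ξ₀) := DFunLike.congr_fun hp_idem _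
    rw [hfac, hb_pos.isSymmetric.apply_clm, hbe, ← hp, map_sub, hpp, sub_self, inner_zero_left]
  have hzero := hsep _ (sub_mem hbM (mul_mem hbM hbM)) (hc.apply_eq_zero_of_inner_eq_zero hinner)
  exact (sub_eq_zero.1 hzero).symm
end

section
/- Let H be a complex Hilbert space, M a von Neumann algebra acting on H, and ξ₀ a cyclic and separating vector for M. If ζ ∈ P♯, ξ₀ − ζ ∈ P♯, and ⟨ζ, ξ₀ − ζ⟩ = 0, then there exists a projection e ∈ M such that ζ = e ξ₀. -/
open scoped InnerProductSpace
open Filter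

variable {H : Type*} [NormedAddCommGroup H] [InnerProductSpace ℂ H] [CompleteSpace H]

/-- Evaluation of the elements of the commutant of `M` at the vector `v`. -/
noncomputable def commutantEval (M : VonNeumannAlgebra H) (v : H) :
    M.commutant.toStarSubalgebra →ₗ[ℂ] H where
  toFun x := (x : H →L[ℂ] H) v
  map_add' _ _ := rfl
  map_smul' _ _ := rfl

theorem commutantEval_apply (M : VonNeumannAlgebra H) (v : H)
    (x : M.commutant.toStarSubalgebra) : commutantEval M v x = (x : H →L[ℂ] H) v :=
  rfl

theorem apply_comm_of_mem_commutant {M : VonNeumannAlgebra H} {a x : H →L[ℂ] H} (ha : a ∈ M)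
    (hx : x ∈ M.commutant) (v : H) : a (x v) = x (a v) :=
  DFunLike.congr_fun (VonNeumannAlgebra.mem_commutant_iff.1 hx a ha) v

/-- A separating vector for `M` is cyclic for the commutant of `M`. -/
theorem IsSeparatingVector.denseRange_commutantEval {M : VonNeumannAlgebra H} {ξ₀ : H}
    (hsep : IsSeparatingVector M ξ₀) : DenseRange (commutantEval M ξ₀) := by
  set K := (LinearMap.range (commutantEval M ξ₀)).topologicalClosure with hK
  have hKc : IsClosed (K : Set H) := Submodule.isClosed_topologicalClosure _
  have : CompleteSpace K := hKc.completeSpace_coe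
  have hp : K.starProjection ∈ M := by
    rw [VonNeumannAlgebra.IsStarProjection.mem_iff isStarProjection_starProjection]
    intro y hy
    rw [Submodule.range_starProjection, Module.End.mem_invtSubmodule]
    intro v hv
    refine map_mem_closure y.continuous hv ?_
    rintro _ ⟨x, rfl⟩
    exact ⟨⟨y * x, mul_mem hy x.2⟩, rfl⟩
  have hξ : ξ₀ ∈ K := Submodule.le_topologicalClosure _ ⟨1, rfl⟩
  have hone : K.starProjection - 1 = 0 := by
    refine hsep _ (sub_mem hp (one_mem M)) ?_
    simp [Submodule.starProjection_eq_self_iff.2 hξ]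
  intro v
  have hv : K.starProjection v = v := by
    have := DFunLike.congr_fun hone v
    simpa [sub_eq_zero] using this
  have hvK : v ∈ K := Submodule.starProjection_eq_self_iff.1 hv
  rwa [hK, ← SetLike.mem_coe, Submodule.topologicalClosure_coe, LinearMap.coe_range] at hvK

/-- Vectors of `P♯` induce symmetric forms on the orbit of `ξ₀` under the commutant. -/
theorem inner_commutant_symm_of_mem_sharpCone {M : VonNeumannAlgebra H} {ξ₀ v : H}
    (hv : v ∈ sharpCone M ξ₀) {x y : H →L[ℂ] H} (hx : x ∈ M.commutant) (hy : y ∈ M.commutant) :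
    ⟪x ξ₀, y v⟫_ℂ = ⟪x v, y ξ₀⟫_ℂ := by
  refine closure_minimal (t := {w | ⟪x ξ₀, y w⟫_ℂ = ⟪x w, y ξ₀⟫_ℂ}) ?_
    (isClosed_eq (by fun_prop) (by fun_prop)) hv
  rintro _ ⟨a, ha, hpos, rfl⟩
  change ⟪x ξ₀, y (a ξ₀)⟫_ℂ = ⟪x (a ξ₀), y ξ₀⟫_ℂ
  rw [← apply_comm_of_mem_commutant ha hx, ← apply_comm_of_mem_commutant ha hy]
  exact (hpos.isSymmetric _ _).symm

/-- Vectors of `P♯` induce positive forms on the orbit of `ξ₀` under the commutant. -/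
theorem re_inner_commutant_nonneg_of_mem_sharpCone {M : VonNeumannAlgebra H} {ξ₀ v : H}
    (hv : v ∈ sharpCone M ξ₀) {x : H →L[ℂ] H} (hx : x ∈ M.commutant) :
    0 ≤ (⟪x ξ₀, x v⟫_ℂ).re := by
  refine closure_minimal (t := {w | 0 ≤ (⟪x ξ₀, x w⟫_ℂ).re}) ?_
    (isClosed_le (by fun_prop) (by fun_prop)) hv
  rintro _ ⟨a, ha, hpos, rfl⟩
  change 0 ≤ (⟪x ξ₀, x (a ξ₀)⟫_ℂ).re
  rw [← apply_comm_of_mem_commutant ha hx]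
  exact hpos.re_inner_nonneg_right _

/-- A symmetric form on the orbit of `ξ₀` bounded by the inner product, both from above and from
below, is represented by vectors of norm at most that of the orbit. -/
theorem norm_commutant_apply_le {M : VonNeumannAlgebra H} {ξ₀ η : H}
    (hdense : DenseRange (commutantEval M ξ₀))
    (hsymm : ∀ x ∈ M.commutant, ∀ y ∈ M.commutant, ⟪x ξ₀, y η⟫_ℂ = ⟪x η, y ξ₀⟫_ℂ)
    (hbound : ∀ x ∈ M.commutant, |(⟪x ξ₀, x η⟫_ℂ).re| ≤ ‖x ξ₀‖ ^ 2)
    {x : H →L[ℂ] H} (hx : x ∈ M.commutant) : ‖x η‖ ≤ ‖x ξ₀‖ := by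
  have key : ∀ v : H, 2 * (⟪v, x η⟫_ℂ).re ≤ ‖x ξ₀‖ ^ 2 + ‖v‖ ^ 2 := by
    intro v
    refine hdense.induction_on (p := fun v => 2 * (⟪v, x η⟫_ℂ).re ≤ ‖x ξ₀‖ ^ 2 + ‖v‖ ^ 2) v
      (isClosed_le (by fun_prop) (by fun_prop)) ?_
    rintro ⟨y, hy⟩
    rw [commutantEval_apply]
    have hadd := (abs_le.1 (hbound _ (add_mem hx hy))).2
    have hsub := (abs_le.1 (hbound _ (sub_mem hx hy))).1
    have hpar := parallelogram_law_with_norm ℂ (x ξ₀) (y ξ₀)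
    have hre : (⟪x ξ₀, y η⟫_ℂ).re = (⟪y ξ₀, x η⟫_ℂ).re := by
      rw [hsymm x hx y hy, ← inner_conj_symm, Complex.conj_re]
    simp only [add_apply, sub_apply, inner_add_left,
      inner_add_right, inner_sub_left, inner_sub_right, Complex.add_re, Complex.sub_re] at hadd hsub
    dsimp only
    nlinarith
  have h := key (x η)
  have hself : (⟪x η, x η⟫_ℂ).re = ‖x η‖ ^ 2 := inner_self_eq_norm_sq (𝕜 := ℂ) (x η)
  rw [hself] at h
  exact le_of_sq_le_sq (by linarith) (norm_nonneg _)

/-- A vector inducing a contractive symmetric form on the orbit of `ξ₀` under the commutant is the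
image of `ξ₀` under a self-adjoint contraction of `M`. -/
theorem exists_isSelfAdjoint_contraction {M : VonNeumannAlgebra H} {ξ₀ η : H}
    (hdense : DenseRange (commutantEval M ξ₀))
    (hsymm : ∀ x ∈ M.commutant, ∀ y ∈ M.commutant, ⟪x ξ₀, y η⟫_ℂ = ⟪x η, y ξ₀⟫_ℂ)
    (hbound : ∀ x ∈ M.commutant, |(⟪x ξ₀, x η⟫_ℂ).re| ≤ ‖x ξ₀‖ ^ 2) :
    ∃ s ∈ M, IsSelfAdjoint s ∧ (∀ v, ‖s v‖ ≤ ‖v‖) ∧ s ξ₀ = η := by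
  have hnorm : ∀ x, ‖commutantEval M η x‖ ≤ 1 * ‖commutantEval M ξ₀ x‖ := fun x => by
    simpa [commutantEval_apply] using norm_commutant_apply_le hdense hsymm hbound x.2
  set s := (commutantEval M η).extendOfNorm (commutantEval M ξ₀)
  have hs : ∀ x ∈ M.commutant, s (x ξ₀) = x η := fun x hx =>
    LinearMap.extendOfNorm_eq hdense ⟨1, hnorm⟩ ⟨x, hx⟩
  refine ⟨s, ?_, ?_, fun v => ?_, by simpa using hs 1 (one_mem _)⟩
  · rw [← VonNeumannAlgebra.commutant_commutant M, VonNeumannAlgebra.mem_commutant_iff]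
    intro y hy
    refine ContinuousLinearMap.ext fun v => ?_
    refine hdense.induction_on (p := fun v => (y * s) v = (s * y) v) v
      (isClosed_eq (by fun_prop) (by fun_prop)) ?_
    rintro ⟨x, hx⟩
    change y (s (x ξ₀)) = s ((y * x) ξ₀)
    rw [hs x hx, hs _ (mul_mem hy hx)]
    rfl
  · rw [ContinuousLinearMap.isSelfAdjoint_iff_isSymmetric]
    intro v w
    refine hdense.induction_on₂ (p := fun v w => ⟪s v, w⟫_ℂ = ⟪v, s w⟫_ℂ)
      (isClosed_eq (by fun_prop) (by fun_prop)) ?_ v w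
    rintro ⟨x, hx⟩ ⟨y, hy⟩
    simp only [commutantEval_apply, hs x hx, hs y hy]
    exact (hsymm x hx y hy).symm
  · simpa using LinearMap.norm_extendOfNorm_apply_le hdense 1 hnorm v

/-- A self-adjoint contraction preserving the norm of a vector squares to the identity on it. -/
theorem IsSelfAdjoint.apply_apply_eq_of_norm_eq {s : H →L[ℂ] H} (hs : IsSelfAdjoint s)
    (hle : ∀ v, ‖s v‖ ≤ ‖v‖) {ξ : H} (hξ : ‖s ξ‖ = ‖ξ‖) : s (s ξ) = ξ := by
  have hinner : (⟪s (s ξ), ξ⟫_ℂ).re = ‖ξ‖ ^ 2 := by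
    have hsym : ⟪s (s ξ), ξ⟫_ℂ = ⟪s ξ, s ξ⟫_ℂ := hs.isSymmetric (s ξ) ξ
    have hself : (⟪s ξ, s ξ⟫_ℂ).re = ‖s ξ‖ ^ 2 := inner_self_eq_norm_sq (𝕜 := ℂ) (s ξ)
    rw [hsym, hself, hξ]
  have hexp : ‖s (s ξ) - ξ‖ ^ 2 = ‖s (s ξ)‖ ^ 2 - 2 * (⟪s (s ξ), ξ⟫_ℂ).re + ‖ξ‖ ^ 2 :=
    norm_sub_sq (𝕜 := ℂ) (s (s ξ)) ξ
  have hss : ‖s (s ξ)‖ ^ 2 ≤ ‖ξ‖ ^ 2 := by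
    have := (hle (s ξ)).trans_eq hξ
    gcongr
  have hzero : ‖s (s ξ) - ξ‖ ^ 2 = 0 := le_antisymm (by linarith) (sq_nonneg _)
  rwa [sq_eq_zero_iff, norm_eq_zero, sub_eq_zero] at hzero

/-- If `ζ ∈ P♯`, `ξ₀ - ζ ∈ P♯`, and `ζ ⊥ (ξ₀ - ζ)`, then `ζ = e ξ₀` for some
projection `e ∈ M`. -/
theorem stmt14 (M : VonNeumannAlgebra H) (ξ₀ : H)
    (hcyc : IsCyclicVector M ξ₀) (hsep : IsSeparatingVector M ξ₀)
    (ζ : H) (hζ : ζ ∈ sharpCone M ξ₀) (hζ' : ξ₀ - ζ ∈ sharpCone M ξ₀)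
    (horth : ⟪ζ, ξ₀ - ζ⟫_ℂ = 0) :
    ∃ e : H →L[ℂ] H, e ∈ M ∧ IsSelfAdjoint e ∧ e * e = e ∧ ζ = e ξ₀ := by
  have hdense := hsep.denseRange_commutantEval
  obtain ⟨s, hsM, hsa, hle, hsξ⟩ := exists_isSelfAdjoint_contraction (η := ζ - (ξ₀ - ζ)) hdense
    (fun x hx y hy => by
      rw [map_sub y ζ, map_sub x ζ, inner_sub_right, inner_sub_left,
        inner_commutant_symm_of_mem_sharpCone hζ hx hy,
        inner_commutant_symm_of_mem_sharpCone hζ' hx hy])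
    (fun x hx => by
      have h₁ := re_inner_commutant_nonneg_of_mem_sharpCone hζ hx
      have h₂ := re_inner_commutant_nonneg_of_mem_sharpCone hζ' hx
      have hself : (⟪x ξ₀, x ξ₀⟫_ℂ).re = ‖x ξ₀‖ ^ 2 := inner_self_eq_norm_sq (𝕜 := ℂ) (x ξ₀)
      simp only [map_sub, inner_sub_right, Complex.sub_re] at h₂ ⊢
      rw [abs_le]
      constructor <;> linarith)
  have hnorm : ‖s ξ₀‖ = ‖ξ₀‖ := by
    have hadd := norm_add_sq (𝕜 := ℂ) ζ (ξ₀ - ζ)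
    have hsub := norm_sub_sq (𝕜 := ℂ) ζ (ξ₀ - ζ)
    rw [horth, map_zero, mul_zero] at hadd hsub
    rw [add_sub_cancel] at hadd
    rw [hsξ, ← sq_eq_sq₀ (norm_nonneg _) (norm_nonneg _), hadd, hsub]
    ring
  have hsq : s * s = 1 := by
    refine sub_eq_zero.1 (hsep _ (sub_mem (mul_mem hsM hsM) (one_mem M)) ?_)
    simp [hsa.apply_apply_eq_of_norm_eq hle hnorm]
  refine ⟨(2⁻¹ : ℂ) • (1 + s), M.toStarSubalgebra.smul_mem (add_mem (one_mem M) hsM) _, ?_, ?_, ?_⟩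
  · exact IsSelfAdjoint.smul (by simp [isSelfAdjoint_iff]) ((IsSelfAdjoint.one _).add hsa)
  · rw [smul_mul_smul_comm, add_mul, mul_add, mul_add, hsq]
    simp only [one_mul, mul_one]
    module
  · simp only [smul_apply, add_apply,
      one_apply_eq_self, hsξ]
    module
end

section
/- Let H be a complex Hilbert space, M a von Neumann algebra acting on H, and ξ₀ a cyclic and separating vector for M. If e and f are projections in M such that (ξ₀ − e ξ₀) − f ξ₀ ∈ P♯, then e and f are mutually orthogonal projections: e f = 0. -/
open scoped InnerProductSpace
open Filter

variable {H : Type*} [NormedAddCommGroup H] [InnerProductSpace ℂ H] [CompleteSpace H]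

/-- The orbit `{y ξ₀ : y ∈ M'}` of a vector under the commutant, as a subspace of `H`. -/
noncomputable def commutantOrbit (M : VonNeumannAlgebra H) (ξ₀ : H) : Submodule ℂ H :=
  M.commutant.toStarSubalgebra.toSubalgebra.toSubmodule.map
    (ContinuousLinearMap.apply ℂ H ξ₀ : (H →L[ℂ] H) →ₗ[ℂ] H)

/-- A vector separating for `M` is cyclic for the commutant of `M`. -/
theorem IsSeparatingVector.dense_commutantOrbit {M : VonNeumannAlgebra H} {ξ₀ : H}
    (hsep : IsSeparatingVector M ξ₀) : Dense (commutantOrbit M ξ₀ : Set H) := by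
  set K := (commutantOrbit M ξ₀).topologicalClosure
  have : CompleteSpace K :=
    (commutantOrbit M ξ₀).isClosed_topologicalClosure.completeSpace_coe
  have hpM : K.starProjection ∈ M := by
    rw [VonNeumannAlgebra.IsStarProjection.mem_iff isStarProjection_starProjection]
    intro y hy v hv
    rw [Submodule.range_starProjection] at hv
    change y v ∈ (K.starProjection).range
    rw [Submodule.range_starProjection]
    refine map_mem_closure y.continuous hv ?_
    rintro _ ⟨z, hz, rfl⟩
    exact ⟨y * z, mul_mem (S := VonNeumannAlgebra H) hy hz, rfl⟩
  have hξ : ξ₀ ∈ K := subset_closure ⟨1, one_mem M.commutant, rfl⟩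
  have hp : 1 - K.starProjection = 0 :=
    hsep _ (sub_mem (one_mem M) hpM)
      (by simp [Submodule.starProjection_eq_self_iff.mpr hξ])
  intro v
  have hv : v - K.starProjection v = 0 := congr($hp v)
  exact Submodule.starProjection_eq_self_iff.mp (sub_eq_zero.mp hv).symm

/-- An element of `M` sending a separating vector `ξ₀` into `P♯` has nonnegative quadratic form. -/
theorem re_inner_nonneg_of_mem_sharpCone {M : VonNeumannAlgebra H} {ξ₀ : H}
    (hsep : IsSeparatingVector M ξ₀) {b : H →L[ℂ] H} (hbM : b ∈ M)
    (hb : b ξ₀ ∈ sharpCone M ξ₀) (v : H) : 0 ≤ RCLike.re ⟪v, b v⟫_ℂ := by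
  have hswap : ∀ y ∈ M.commutant, ∀ a ∈ M,
      ⟪y ξ₀, a (y ξ₀)⟫_ℂ = ⟪y ξ₀, y (a ξ₀)⟫_ℂ := fun y hy a ha => by
    have hay : a (y ξ₀) = y (a ξ₀) :=
      congr($(VonNeumannAlgebra.mem_commutant_iff.mp hy a ha) ξ₀)
    rw [hay]
  have hclosed : IsClosed {v : H | 0 ≤ RCLike.re ⟪v, b v⟫_ℂ} :=
    isClosed_le continuous_const (by fun_prop)
  refine hclosed.closure_subset_iff.mpr ?_ (hsep.dense_commutantOrbit v)
  rintro _ ⟨y, hy, rfl⟩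
  change 0 ≤ RCLike.re ⟪y ξ₀, b (y ξ₀)⟫_ℂ
  rw [hswap y hy b hbM]
  have hclosed' : IsClosed {ζ : H | 0 ≤ RCLike.re ⟪y ξ₀, y ζ⟫_ℂ} :=
    isClosed_le continuous_const (by fun_prop)
  refine hclosed'.closure_subset_iff.mpr ?_ hb
  rintro _ ⟨a, haM, ha, rfl⟩
  change 0 ≤ RCLike.re ⟪y ξ₀, y (a ξ₀)⟫_ℂ
  rw [← hswap y hy a haM]
  exact ha.re_inner_nonneg_right _

/-- If `e` and `f` are projections in `M` with `(ξ₀ - e ξ₀) - f ξ₀ ∈ P♯`,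
then `e f = 0`. -/
theorem stmt15 (M : VonNeumannAlgebra H) (ξ₀ : H)
    (hcyc : IsCyclicVector M ξ₀) (hsep : IsSeparatingVector M ξ₀)
    (e f : H →L[ℂ] H) (heM : e ∈ M) (he_sa : IsSelfAdjoint e) (he_idem : e * e = e)
    (hfM : f ∈ M) (hf_sa : IsSelfAdjoint f) (hf_idem : f * f = f)
    (h : (ξ₀ - e ξ₀) - f ξ₀ ∈ sharpCone M ξ₀) :
    e * f = 0 := by
  have hbM : 1 - e - f ∈ M := sub_mem (sub_mem (one_mem M) heM) hfM
  ext x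
  have hpos := re_inner_nonneg_of_mem_sharpCone hsep hbM h (f x)
  have hff : f (f x) = f x := congr($hf_idem x)
  have hee : e (e (f x)) = e (f x) := congr($he_idem (f x))
  have hb : (1 - e - f) (f x) = -e (f x) := by simp [hff]
  have hinner : ⟪f x, e (f x)⟫_ℂ = ⟪e (f x), e (f x)⟫_ℂ := by
    conv_lhs => rw [← hee]
    exact (he_sa.isSymmetric (f x) (e (f x))).symm
  rw [hb, inner_neg_right, hinner, map_neg, inner_self_eq_norm_sq] at hpos
  change e (f x) = 0
  exact norm_eq_zero.mp (pow_eq_zero_iff two_ne_zero |>.mp (by nlinarith [sq_nonneg ‖e (f x)‖]))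
end

section
/- Let H be a complex Hilbert space, M a von Neumann algebra acting on H, and ξ₀ a cyclic and separating vector for M. If z ∈ M is self-adjoint and z ξ₀ ∈ P♯, then z is positive. -/
open scoped InnerProductSpace
open Filter

variable {H : Type*} [NormedAddCommGroup H] [InnerProductSpace ℂ H] [CompleteSpace H]

theorem mem_commutantOrbit {M : VonNeumannAlgebra H} {ξ₀ ζ : H} :
    ζ ∈ commutantOrbit M ξ₀ ↔ ∃ y ∈ M.commutant, y ξ₀ = ζ :=
  Iff.rfl

/-- For `a ∈ M` and `y` in the commutant of `M`, `⟪a y ξ₀, y ξ₀⟫ = ⟪a ξ₀, y* y ξ₀⟫`. -/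
theorem inner_apply_commutant {M : VonNeumannAlgebra H} {a y : H →L[ℂ] H} (ha : a ∈ M)
    (hy : y ∈ M.commutant) (ξ₀ : H) :
    ⟪a (y ξ₀), y ξ₀⟫_ℂ = ⟪a ξ₀, (star y * y) ξ₀⟫_ℂ := by
  have h : a (y ξ₀) = y (a ξ₀) :=
    DFunLike.congr_fun (VonNeumannAlgebra.mem_commutant_iff.1 hy a ha) ξ₀
  rw [h, ContinuousLinearMap.star_eq_adjoint, mul_apply_eq_comp,
    ContinuousLinearMap.adjoint_inner_right]

theorem re_inner_nonneg_of_mem_sharpCone_s16 {M : VonNeumannAlgebra H} {ξ₀ ζ : H}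
    (hζ : ζ ∈ sharpCone M ξ₀) {y : H →L[ℂ] H} (hy : y ∈ M.commutant) :
    0 ≤ (⟪ζ, (star y * y) ξ₀⟫_ℂ).re := by
  have hclosed : IsClosed {ζ : H | 0 ≤ (⟪ζ, (star y * y) ξ₀⟫_ℂ).re} :=
    isClosed_le continuous_const (by fun_prop)
  refine closure_minimal ?_ hclosed hζ
  rintro _ ⟨a, haM, ha, rfl⟩
  rw [Set.mem_ofPred_eq, ← inner_apply_commutant haM hy]
  exact ha.re_inner_nonneg_left _

/-- If `z ∈ M` is self-adjoint and `z ξ₀ ∈ P♯`, then `z` is positive. -/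
theorem stmt16 (M : VonNeumannAlgebra H) (ξ₀ : H)
    (hcyc : IsCyclicVector M ξ₀) (hsep : IsSeparatingVector M ξ₀)
    (z : H →L[ℂ] H) (hzM : z ∈ M) (hz_sa : IsSelfAdjoint z)
    (hzξ : z ξ₀ ∈ sharpCone M ξ₀) :
    z.IsPositive := by
  refine ContinuousLinearMap.isPositive_def'.2 ⟨hz_sa, fun ζ => ?_⟩
  have hclosed : IsClosed {ζ : H | 0 ≤ (⟪z ζ, ζ⟫_ℂ).re} :=
    isClosed_le continuous_const (by fun_prop)
  refine closure_minimal ?_ hclosed (hsep.dense_commutantOrbit ζ)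
  rintro _ ⟨y, hy, rfl⟩
  change 0 ≤ (⟪z (y ξ₀), y ξ₀⟫_ℂ).re
  rw [inner_apply_commutant hzM hy]
  exact re_inner_nonneg_of_mem_sharpCone_s16 hzξ hy
end

section
/- Let H be a complex Hilbert space, M a von Neumann algebra acting on H, and ξ₀ a cyclic and separating vector for M. For every a ∈ M with 0 ≤ a ≤ 1 there exists a projection e ∈ M such that e ξ₀ − a ξ₀ ∈ P♯, and for every projection f ∈ M with f ξ₀ − a ξ₀ ∈ P♯ one has f ξ₀ − e ξ₀ ∈ P♯; that is, e ξ₀ is the least projective vector dominating a ξ₀. -/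
open scoped InnerProductSpace
open Filter

variable {H : Type*} [NormedAddCommGroup H] [InnerProductSpace ℂ H] [CompleteSpace H]

namespace VonNeumannAlgebra

/-- The orthogonal projection onto the closure of a subspace that is invariant under the commutant
of `M` lies in `M`. -/
theorem starProjection_topologicalClosure_mem (M : VonNeumannAlgebra H) (U : Submodule ℂ H)
    (hU : ∀ y ∈ M.commutant, ∀ v ∈ U, y v ∈ U) :
    U.topologicalClosure.starProjection ∈ M := by
  refine (IsStarProjection.mem_iff isStarProjection_starProjection M).2 fun y hy => ?_
  rw [Submodule.range_starProjection]
  exact Submodule.topologicalClosure_mem_invtSubmodule (f := y) fun v hv => hU y hy v hv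

/-- A separating vector for `M` is cyclic for the commutant of `M`. -/
theorem dense_commutant_apply (M : VonNeumannAlgebra H) {ξ₀ : H} (hsep : IsSeparatingVector M ξ₀) :
    Dense {η : H | ∃ y ∈ M.commutant, y ξ₀ = η} := by
  let U : Submodule ℂ H := (Subalgebra.toSubmodule M.commutant.toSubalgebra).map
    (ContinuousLinearMap.apply ℂ H ξ₀).toLinearMap
  have hpM : U.topologicalClosure.starProjection ∈ M := by
    refine M.starProjection_topologicalClosure_mem U ?_
    rintro y hy _ ⟨z, hz, rfl⟩
    exact ⟨y * z, M.commutant.mul_mem' hy hz, rfl⟩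
  have hξ : ξ₀ ∈ U.topologicalClosure :=
    U.le_topologicalClosure ⟨1, M.commutant.one_mem', rfl⟩
  have h1 : 1 - U.topologicalClosure.starProjection = 0 := by
    refine hsep _ (sub_mem (one_mem M) hpM) ?_
    simp [Submodule.starProjection_eq_self_iff.2 hξ]
  intro v
  have hv : v ∈ U.topologicalClosure := by
    rw [← Submodule.starProjection_eq_self_iff, ← sub_eq_zero.1 h1]
    rfl
  exact hv

/-- A self-adjoint element of `M` that maps a separating vector into `P♯` is positive. -/
theorem isPositive_of_apply_mem_sharpCone (M : VonNeumannAlgebra H) {ξ₀ : H}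
    (hsep : IsSeparatingVector M ξ₀) {x : H →L[ℂ] H} (hxM : x ∈ M) (hx : IsSelfAdjoint x)
    (hxξ : x ξ₀ ∈ sharpCone M ξ₀) : x.IsPositive := by
  refine ContinuousLinearMap.isPositive_def'.2 ⟨hx, fun v => ?_⟩
  have hmove : ∀ y ∈ M.commutant, ∀ b ∈ M,
      ⟪b (y ξ₀), y ξ₀⟫_ℂ = ⟪b ξ₀, (star y * y) ξ₀⟫_ℂ := by
    intro y hy b hb
    have hby : b (y ξ₀) = y (b ξ₀) :=
      congrArg (fun T : H →L[ℂ] H => T ξ₀) (mem_commutant_iff.1 hy b hb)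
    rw [hby, ContinuousLinearMap.star_eq_adjoint, mul_apply_eq_comp,
      ContinuousLinearMap.adjoint_inner_right]
  refine (M.dense_commutant_apply hsep).induction (P := fun v => 0 ≤ x.reApplyInnerSelf v) ?_
    (isClosed_le continuous_const x.reApplyInnerSelf_continuous) v
  rintro _ ⟨y, hy, rfl⟩
  rw [ContinuousLinearMap.reApplyInnerSelf_apply, hmove y hy x hxM]
  refine closure_minimal (t := {ζ : H | 0 ≤ RCLike.re ⟪ζ, (star y * y) ξ₀⟫_ℂ}) ?_
    (isClosed_le continuous_const (by fun_prop)) hxξ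
  rintro _ ⟨b, hbM, hb, rfl⟩
  rw [Set.mem_ofPred_eq, ← hmove y hy b hbM]
  exact hb.re_inner_nonneg_left _

end VonNeumannAlgebra

/-- A positive operator dominated by a projection `f` satisfies `f * a = a`. -/
theorem IsStarProjection.mul_eq_right_of_isPositive_sub {f a : H →L[ℂ] H}
    (hf : IsStarProjection f) (ha : a.IsPositive) (hfa : (f - a).IsPositive) : f * a = a := by
  have ha0 : 0 ≤ a := (ContinuousLinearMap.nonneg_iff_isPositive a).2 ha
  have hfa0 : 0 ≤ f - a := (ContinuousLinearMap.nonneg_iff_isPositive _).2 hfa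
  have hg : star (1 - f) = 1 - f := hf.one_sub.isSelfAdjoint.star_eq
  have hff : f * f = f := hf.isIdempotentElem.eq
  have h1 : 0 ≤ star (1 - f) * a * (1 - f) := star_left_conjugate_nonneg ha0 _
  have h2 : 0 ≤ star (1 - f) * (f - a) * (1 - f) := star_left_conjugate_nonneg hfa0 _
  have h3 : star (1 - f) * (f - a) * (1 - f) = -(star (1 - f) * a * (1 - f)) := by
    rw [hg, mul_sub (1 - f) f a, sub_mul 1 f f, one_mul, hff, sub_self, zero_sub, neg_mul]
  have h4 : star (1 - f) * a * (1 - f) = 0 :=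
    le_antisymm (neg_nonneg.1 (h3 ▸ h2)) h1
  obtain ⟨b, rfl⟩ := CStarAlgebra.nonneg_iff_eq_star_mul_self.1 ha0
  have h5 : b * (1 - f) = 0 := by
    rw [← CStarRing.star_mul_self_eq_zero_iff, star_mul, ← h4]
    simp only [mul_assoc]
  have h6 : (1 - f) * star b = 0 := by
    simpa [hg] using congrArg star h5
  have h7 : star b - f * star b = 0 := by rwa [sub_mul, one_mul] at h6
  rw [← mul_assoc, ← sub_eq_zero.1 h7]

/-- Every `a ∈ M` with `0 ≤ a ≤ 1` has a least projective vector above `a ξ₀`: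
a projection `e ∈ M` with `a ξ₀ ≤ e ξ₀`, least among all projections `f ∈ M` with
`a ξ₀ ≤ f ξ₀` (where `ζ ≤ η` means `η - ζ ∈ P♯`). -/
theorem stmt17 (M : VonNeumannAlgebra H) (ξ₀ : H)
    (hcyc : IsCyclicVector M ξ₀) (hsep : IsSeparatingVector M ξ₀)
    (a : H →L[ℂ] H) (haM : a ∈ M) (ha_pos : a.IsPositive) (ha_le : (1 - a).IsPositive) :
    ∃ e : H →L[ℂ] H, e ∈ M ∧ IsSelfAdjoint e ∧ e * e = e ∧
      e ξ₀ - a ξ₀ ∈ sharpCone M ξ₀ ∧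
      ∀ f : H →L[ℂ] H, f ∈ M → IsSelfAdjoint f → f * f = f →
        f ξ₀ - a ξ₀ ∈ sharpCone M ξ₀ → f ξ₀ - e ξ₀ ∈ sharpCone M ξ₀ := by
  let U : Submodule ℂ H := (a : H →ₗ[ℂ] H).range
  have he : IsStarProjection U.topologicalClosure.starProjection := isStarProjection_starProjection
  have heM : U.topologicalClosure.starProjection ∈ M := by
    refine M.starProjection_topologicalClosure_mem U ?_
    rintro y hy _ ⟨v, rfl⟩
    exact ⟨y v, congrArg (fun T : H →L[ℂ] H => T v) (VonNeumannAlgebra.mem_commutant_iff.1 hy a haM)⟩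
  have hmul_le : ∀ f : H →L[ℂ] H, f * a = a → f * U.topologicalClosure.starProjection =
      U.topologicalClosure.starProjection := by
    intro f hfa
    have hle : U.topologicalClosure ≤ (f - 1).ker := by
      refine U.topologicalClosure_minimal ?_ (f - 1).isClosed_ker
      rintro _ ⟨v, rfl⟩
      simpa [sub_eq_zero] using congrArg (fun T : H →L[ℂ] H => T v) hfa
    ext v
    simpa [sub_eq_zero] using hle (U.topologicalClosure.starProjection_apply_mem v)
  have hea : U.topologicalClosure.starProjection * a = a := by
    ext v
    exact Submodule.starProjection_eq_self_iff.2 (U.le_topologicalClosure ⟨v, rfl⟩)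
  generalize U.topologicalClosure.starProjection = e at he heM hmul_le hea
  have hae : a * e = a := by
    simpa [he.isSelfAdjoint.star_eq, ha_pos.isSelfAdjoint.star_eq] using congrArg star hea
  refine ⟨e, heM, he.isSelfAdjoint, he.isIdempotentElem, ?_, fun f hfM hfs hff hf => ?_⟩
  · refine subset_closure ⟨e - a, sub_mem heM haM, ?_, rfl⟩
    have hconj : star e * (1 - a) * e = e - a := by
      rw [he.isSelfAdjoint.star_eq, mul_sub, mul_one, hea, sub_mul, he.isIdempotentElem.eq, hae]
    rw [← hconj, ← ContinuousLinearMap.nonneg_iff_isPositive]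
    exact star_left_conjugate_nonneg
      ((ContinuousLinearMap.nonneg_iff_isPositive _).2 ha_le) e
  · have hfp : IsStarProjection f := ⟨hff, hfs⟩
    have hfa : (f - a).IsPositive := M.isPositive_of_apply_mem_sharpCone hsep (sub_mem hfM haM)
      (hfs.sub ha_pos.isSelfAdjoint) hf
    have hfe := hmul_le f (hfp.mul_eq_right_of_isPositive_sub ha_pos hfa)
    exact subset_closure ⟨f - e, sub_mem hfM heM,
      .of_isStarProjection (he.sub_of_mul_eq_right hfp hfe), rfl⟩
end

section
/- Let H be a complex Hilbert space, M a von Neumann algebra acting on H, and ξ₀ a cyclic and separating vector for M. Let e ∈ M be a projection and p an orthogonal projection on H such that p x ξ₀ = x e ξ₀ for every x ∈ M. Then p ξ₀ = e ξ₀, p commutes with every element of M (p belongs to the commutant M′), and ⟨x e ξ₀, ξ₀⟩ = ⟨e x ξ₀, ξ₀⟩ for every x ∈ M. -/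
open scoped InnerProductSpace
open Filter

variable {H : Type*} [NormedAddCommGroup H] [InnerProductSpace ℂ H] [CompleteSpace H]

/-- If `e ∈ M` is a projection and `p` an orthogonal projection on `H` with
`p x ξ₀ = x e ξ₀` for all `x ∈ M`, then `p ξ₀ = e ξ₀`, `p ∈ M′`, and
`⟨x e ξ₀, ξ₀⟩ = ⟨e x ξ₀, ξ₀⟩` for all `x ∈ M`. -/
theorem stmt19 (M : VonNeumannAlgebra H) (ξ₀ : H)
    (hcyc : IsCyclicVector M ξ₀) (hsep : IsSeparatingVector M ξ₀)
    (e : H →L[ℂ] H) (heM : e ∈ M) (he_sa : IsSelfAdjoint e) (he_idem : e * e = e)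
    (p : H →L[ℂ] H) (hp_sa : IsSelfAdjoint p) (hp_idem : p * p = p)
    (hpe : ∀ x ∈ M, p (x ξ₀) = x (e ξ₀)) :
    p ξ₀ = e ξ₀ ∧ (∀ x ∈ M, p * x = x * p) ∧
      ∀ x ∈ M, ⟪(x * e) ξ₀, ξ₀⟫_ℂ = ⟪(e * x) ξ₀, ξ₀⟫_ℂ := by
  have hpξ : p ξ₀ = e ξ₀ := by simpa using hpe 1 (one_mem M)
  refine ⟨hpξ, fun x hx => ?_, fun x hx => ?_⟩
  · refine ContinuousLinearMap.ext_on hcyc ?_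
    rintro _ ⟨y, hy, rfl⟩
    simpa [hpe y hy] using hpe (x * y) (mul_mem hx hy)
  · have he := (ContinuousLinearMap.isSelfAdjoint_iff_isSymmetric.mp he_sa) (x ξ₀) ξ₀
    have hp := (ContinuousLinearMap.isSelfAdjoint_iff_isSymmetric.mp hp_sa) (x ξ₀) ξ₀
    simp only [ContinuousLinearMap.coe_coe] at he hp
    simp only [mul_apply_eq_comp]
    rw [← hpe x hx, hp, hpξ, he]
end
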